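/- Under the hypotheses of the previous statement, for every integer m ≥ 2 and all x, b ∈ (0,∞)ⁿ with x ≤ b componentwise, F^{m*}(x) > (r(b))^m F₁^{m*}(x₁) F₂^{m*}(x₂). -/

import Mathlib

open MeasureTheory Filter Set

/-- Update one coordinate of a point of `(0,∞)^k × (0,∞)^l`, coordinates
indexed by `Fin k ⊕ Fin l`. -/
def updCoord {k l : ℕ} (x : (Fin k → ℝ) × (Fin l → ℝ)) :
    Fin k ⊕ Fin l → ℝ → (Fin k → ℝ) × (Fin l → ℝ)
  | Sum.inl i, t => (Function.update x.1 i t, x.2)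
  | Sum.inr j, t => (x.1, Function.update x.2 j t)

/-- The value of one coordinate. -/
def coordVal {k l : ℕ} (x : (Fin k → ℝ) × (Fin l → ℝ)) : Fin k ⊕ Fin l → ℝ
  | Sum.inl i => x.1 i
  | Sum.inr j => x.2 j

/-!
Let `μ`, `μ₁`, `μ₂` have the cdfs `F`, `F₁`, `F₂`, and put `σ = r(b) • μ₁.prod μ₂`. Since `r` is
decreasing, `σ (Iic z) ≤ μ (Iic z)` for all `z ≤ b`, and the `m`-fold convolution of `σ` is
`r(b) ^ m • (μ₁^{m*}).prod (μ₂^{m*})`, so the claim compares the lower orthants of two convolution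
powers. For measures on the positive orthant, convolving on the right preserves the order of the
masses of lower orthants, because `(ρ ∗ μ) (Iic x)` averages `ρ (Iic (x - y))` over `μ`;
commutativity lets one exchange the factors `σ` for `μ` one at a time.

For strictness, `r` cannot be constant on `{z | z ≤ b}`, for there `log F` would split as a function
of `x₁` plus a function of `x₂`, with vanishing mixed derivatives. Hence `r(b) < r(w)` for some `w`,
and `σ (Iic z) < μ (Iic z)` for `z` near the origin. As `μ` charges every nonempty open subset of
the positive orthant, it charges the `y` with `x - y` near the origin, so the next convolution is
strict at every `x ≤ b` in the orthant, in particular again near the origin.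
-/

open scoped ENNReal Topology

section ConvPow

/-- The `n`-fold convolution power `μ ∗ ⋯ ∗ μ`, with `convPow μ 0` the unit mass at `0`. -/
noncomputable def convPow {E : Type*} [AddMonoid E] [MeasurableSpace E] (μ : Measure E) :
    ℕ → Measure E
  | 0 => Measure.dirac 0
  | n + 1 => convPow μ n ∗ μ

section AddMonoid

variable {E : Type*} [AddMonoid E] [MeasurableSpace E]

instance isFiniteMeasure_convPow [MeasurableAdd₂ E] (μ : Measure E) [IsFiniteMeasure μ] (n : ℕ) :
    IsFiniteMeasure (convPow μ n) := by
  induction n with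
  | zero => rw [convPow]; infer_instance
  | succ n ih => rw [convPow]; infer_instance

lemma convPow_one [MeasurableAdd₂ E] (μ : Measure E) [SFinite μ] : convPow μ 1 = μ := by
  rw [convPow, convPow, Measure.dirac_zero_conv]

lemma convPow_smul (c : ℝ≥0∞) (μ : Measure E) [SFinite μ] (n : ℕ) :
    convPow (c • μ) n = c ^ n • convPow μ n := by
  induction n with
  | zero => simp [convPow]
  | succ n ih =>
    rw [convPow, convPow, ih, Measure.conv_smul_left, Measure.conv_smul_right, smul_smul, pow_succ]

instance measurableAdd₂_prod {E' : Type*} [AddMonoid E'] [MeasurableSpace E'] [MeasurableAdd₂ E]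
    [MeasurableAdd₂ E'] : MeasurableAdd₂ (E × E') :=
  ⟨(by fun_prop : Measurable fun p : (E × E') × E × E' => (p.1.1 + p.2.1, p.1.2 + p.2.2))⟩

lemma prod_conv_prod {E' : Type*} [AddMonoid E'] [MeasurableSpace E'] [MeasurableAdd₂ E]
    [MeasurableAdd₂ E'] (μ ν : Measure E) (μ' ν' : Measure E') [IsFiniteMeasure μ]
    [IsFiniteMeasure ν] [IsFiniteMeasure μ'] [IsFiniteMeasure ν'] :
    μ.prod μ' ∗ ν.prod ν' = (μ ∗ ν).prod (μ' ∗ ν') := by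
  refine (Measure.prod_eq fun s t hs ht => ?_).symm
  have hs' : Measurable (s.indicator (1 : E → ℝ≥0∞)) := measurable_one.indicator hs
  have ht' : Measurable (t.indicator (1 : E' → ℝ≥0∞)) := measurable_one.indicator ht
  calc (μ.prod μ' ∗ ν.prod ν') (s ×ˢ t)
      = ∫⁻ z, s.indicator 1 z.1 * t.indicator 1 z.2 ∂(μ.prod μ' ∗ ν.prod ν') := by
        rw [← lintegral_indicator_one (hs.prod ht)]
        exact lintegral_congr fun _ => indicator_prod_one
    _ = ∫⁻ p, ∫⁻ q, s.indicator 1 (p.1 + q.1) * t.indicator 1 (p.2 + q.2) ∂(ν.prod ν')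
          ∂(μ.prod μ') := Measure.lintegral_conv (by fun_prop)
    _ = ∫⁻ p, (∫⁻ q, s.indicator 1 (p.1 + q) ∂ν) * (∫⁻ q, t.indicator 1 (p.2 + q) ∂ν')
          ∂(μ.prod μ') := by
        refine lintegral_congr fun p => ?_
        exact lintegral_prod_mul (f := fun q => s.indicator 1 (p.1 + q))
          (g := fun q => t.indicator 1 (p.2 + q)) (by fun_prop) (by fun_prop)
    _ = (∫⁻ p, ∫⁻ q, s.indicator 1 (p + q) ∂ν ∂μ) * ∫⁻ p, ∫⁻ q, t.indicator 1 (p + q) ∂ν' ∂μ' :=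
        lintegral_prod_mul (f := fun p => ∫⁻ q, s.indicator 1 (p + q) ∂ν)
          (g := fun p => ∫⁻ q, t.indicator 1 (p + q) ∂ν')
          (by fun_prop) (by fun_prop)
    _ = (μ ∗ ν) s * (μ' ∗ ν') t := by
        rw [← Measure.lintegral_conv hs', ← Measure.lintegral_conv ht', lintegral_indicator_one hs,
          lintegral_indicator_one ht]

lemma convPow_prod {E' : Type*} [AddMonoid E'] [MeasurableSpace E'] [MeasurableAdd₂ E]
    [MeasurableAdd₂ E'] (μ : Measure E) (μ' : Measure E') [IsFiniteMeasure μ]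
    [IsFiniteMeasure μ'] (n : ℕ) :
    convPow (μ.prod μ') n = (convPow μ n).prod (convPow μ' n) := by
  induction n with
  | zero => rw [convPow, convPow, convPow, Measure.dirac_prod_dirac]; rfl
  | succ n ih => rw [convPow, convPow, convPow, ih, prod_conv_prod]

lemma measureReal_convPow_smul_prod_Iic [Preorder E] {E' : Type*} [AddMonoid E'] [Preorder E']
    [MeasurableSpace E'] [MeasurableAdd₂ E] [MeasurableAdd₂ E'] (μ : Measure E) (μ' : Measure E')
    [IsFiniteMeasure μ] [IsFiniteMeasure μ'] {c : ℝ} (hc : 0 ≤ c) (n : ℕ) (x : E × E') :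
    (convPow (ENNReal.ofReal c • μ.prod μ') n).real (Iic x) =
      c ^ n * ((convPow μ n).real (Iic x.1) * (convPow μ' n).real (Iic x.2)) := by
  rw [convPow_smul, convPow_prod, measureReal_ennreal_smul_apply, Iic_prod_eq,
    measureReal_prod_prod, ENNReal.toReal_pow, ENNReal.toReal_ofReal hc]

end AddMonoid

section TopologicalAddGroup

variable {E : Type*} [AddCommGroup E] [TopologicalSpace E] [IsTopologicalAddGroup E]
  {P : Set E} {x : E}

lemma eventually_sub_mem (hP : IsOpen P) (hx : x ∈ P) : ∀ᶠ z in 𝓝 0, x - z ∈ P :=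
  (continuous_sub_left x).continuousAt.eventually_mem (hP.mem_nhds (by simpa using hx))

lemma frequently_ae_sub [MeasurableSpace E] {μ : Measure E} (hP : IsOpen P) (h0 : 0 ∈ closure P)
    (hμP : ∀ U ⊆ P, IsOpen U → U.Nonempty → μ U ≠ 0) (hx : x ∈ P) {q : E → Prop}
    (hq : ∀ᶠ z in 𝓝[P] 0, q z) : ∃ᶠ y in ae μ, q (x - y) := by
  have : (𝓝[P] (0 : E)).NeBot := mem_closure_iff_nhdsWithin_neBot.1 h0
  obtain ⟨U, hU, hU0, hUq⟩ := mem_nhdsWithin.1 hq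
  have hopen : IsOpen (P ∩ (x - ·) ⁻¹' (U ∩ P)) :=
    hP.inter ((hU.inter hP).preimage (continuous_sub_left x))
  have hnonempty : (P ∩ (x - ·) ⁻¹' (U ∩ P)).Nonempty := by
    have hxz : ∀ᶠ z in 𝓝[P] (0 : E), x - z ∈ P :=
      eventually_nhdsWithin_of_eventually_nhds (eventually_sub_mem hP hx)
    have hzU : ∀ᶠ z in 𝓝[P] (0 : E), z ∈ U :=
      eventually_nhdsWithin_of_eventually_nhds (hU.mem_nhds hU0)
    obtain ⟨z, ⟨hxz, hzU⟩, hzP⟩ := ((hxz.and hzU).and eventually_mem_nhdsWithin).exists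
    exact ⟨x - z, hxz, by simpa using ⟨hzU, hzP⟩⟩
  exact (frequently_ae_mem_iff.2 (hμP _ inter_subset_left hopen hnonempty)).mono
    fun y hy => hUq hy.2

end TopologicalAddGroup

section Ordered

lemma measure_Iic_eq_zero {E : Type*} [Preorder E] [Zero E] [MeasurableSpace E] {μ : Measure E}
    {x : E} (hμ : ∀ᵐ y ∂μ, 0 ≤ y) (hx : ¬ 0 ≤ x) : μ (Iic x) = 0 :=
  measure_mono_null (fun _ hyx hy => hx (le_trans hy hyx)) (ae_iff.1 hμ)

lemma setOf_add_le_eq_Iic_sub {E : Type*} [AddCommGroup E] [Preorder E] [IsOrderedAddMonoid E]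
    (x y : E) : {z | z + y ≤ x} = Iic (x - y) := by
  ext z
  simp [le_sub_iff_add_le]

variable {E : Type*} [AddCommGroup E] [PartialOrder E] [IsOrderedAddMonoid E] [MeasurableSpace E]
  [MeasurableAdd₂ E] [TopologicalSpace E] [OrderClosedTopology E] [OpensMeasurableSpace E]
  {ρ σ μ ν : Measure E} {P : Set E} {x : E}

lemma ae_nonneg_conv [SFinite μ] [SFinite ν] (hμ : ∀ᵐ y ∂μ, 0 ≤ y) (hν : ∀ᵐ y ∂ν, 0 ≤ y) :
    ∀ᵐ y ∂(μ ∗ ν), 0 ≤ y := by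
  refine (ae_map_iff (by fun_prop) measurableSet_Ici).2 ?_
  filter_upwards [Measure.quasiMeasurePreserving_fst.ae hμ,
    Measure.quasiMeasurePreserving_snd.ae hν] with p hp₁ hp₂ using add_nonneg hp₁ hp₂

lemma ae_nonneg_convPow [IsFiniteMeasure μ] (hμ : ∀ᵐ y ∂μ, 0 ≤ y) (n : ℕ) :
    ∀ᵐ y ∂convPow μ n, 0 ≤ y := by
  induction n with
  | zero => exact (ae_dirac_iff measurableSet_Ici).2 le_rfl
  | succ n ih => exact ae_nonneg_conv ih hμ

lemma measurable_measure_Iic_sub (μ : Measure E) [SFinite μ] (x : E) :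
    Measurable fun y => μ (Iic (x - y)) := by
  simp_rw [← setOf_add_le_eq_Iic_sub]
  exact measurable_measure_prodMk_right (measurableSet_Iic.preimage measurable_add)

lemma conv_Iic (μ ν : Measure E) [SFinite μ] [SFinite ν] (x : E) :
    (μ ∗ ν) (Iic x) = ∫⁻ y, μ (Iic (x - y)) ∂ν := by
  simp_rw [← setOf_add_le_eq_Iic_sub]
  rw [Measure.conv, Measure.map_apply measurable_add measurableSet_Iic,
    Measure.prod_apply_symm (measurableSet_Iic.preimage measurable_add)]
  rfl

lemma conv_Iic_le_left [SFinite ρ] [SFinite ν] [SFinite μ] (hμ : ∀ᵐ y ∂μ, 0 ≤ y)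
    (hle : ∀ z ≤ x, ρ (Iic z) ≤ ν (Iic z)) : (ρ ∗ μ) (Iic x) ≤ (ν ∗ μ) (Iic x) := by
  rw [conv_Iic, conv_Iic]
  refine lintegral_mono_ae ?_
  filter_upwards [hμ] with y hy using hle _ (sub_le_self x hy)

lemma conv_Iic_lt_left [IsFiniteMeasure ρ] [SFinite ν] [IsFiniteMeasure μ]
    (hμ : ∀ᵐ y ∂μ, 0 ≤ y) (hle : ∀ z ≤ x, ρ (Iic z) ≤ ν (Iic z))
    (hlt : ∃ᶠ y in ae μ, ρ (Iic (x - y)) < ν (Iic (x - y))) :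
    (ρ ∗ μ) (Iic x) < (ν ∗ μ) (Iic x) := by
  have hfin : (ρ ∗ μ) (Iic x) ≠ ∞ := measure_ne_top _ _
  rw [conv_Iic] at hfin ⊢
  rw [conv_Iic]
  refine lintegral_strict_mono_of_ae_le_of_frequently_ae_lt
    (measurable_measure_Iic_sub ν x).aemeasurable hfin ?_ (hlt.mono fun _ => ne_of_lt)
  filter_upwards [hμ] with y hy using hle _ (sub_le_self x hy)

lemma conv_Iic_le_conv_Iic [SFinite ρ] [SFinite σ] [SFinite μ] [SFinite ν]
    (hρ : ∀ᵐ y ∂ρ, 0 ≤ y) (hμ : ∀ᵐ y ∂μ, 0 ≤ y) (hρν : ∀ z ≤ x, ρ (Iic z) ≤ ν (Iic z))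
    (hσμ : ∀ z ≤ x, σ (Iic z) ≤ μ (Iic z)) : (ρ ∗ σ) (Iic x) ≤ (ν ∗ μ) (Iic x) :=
  calc (ρ ∗ σ) (Iic x) = (σ ∗ ρ) (Iic x) := by rw [Measure.conv_comm]
    _ ≤ (μ ∗ ρ) (Iic x) := conv_Iic_le_left hρ hσμ
    _ = (ρ ∗ μ) (Iic x) := by rw [Measure.conv_comm]
    _ ≤ (ν ∗ μ) (Iic x) := conv_Iic_le_left hμ hρν

lemma conv_Iic_lt_conv_Iic [IsFiniteMeasure ρ] [SFinite σ] [IsFiniteMeasure μ] [SFinite ν]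
    (hρ : ∀ᵐ y ∂ρ, 0 ≤ y) (hμ : ∀ᵐ y ∂μ, 0 ≤ y) (hρν : ∀ z ≤ x, ρ (Iic z) ≤ ν (Iic z))
    (hσμ : ∀ z ≤ x, σ (Iic z) ≤ μ (Iic z))
    (hlt : ∃ᶠ y in ae μ, ρ (Iic (x - y)) < ν (Iic (x - y))) :
    (ρ ∗ σ) (Iic x) < (ν ∗ μ) (Iic x) :=
  (conv_Iic_le_conv_Iic hρ hμ (fun _ _ => le_rfl) hσμ).trans_lt (conv_Iic_lt_left hμ hρν hlt)

lemma convPow_Iic_le [IsFiniteMeasure σ] [IsFiniteMeasure μ] (hσ : ∀ᵐ y ∂σ, 0 ≤ y)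
    (hμ : ∀ᵐ y ∂μ, 0 ≤ y) (hle : ∀ z ≤ x, σ (Iic z) ≤ μ (Iic z)) (n : ℕ) :
    convPow σ n (Iic x) ≤ convPow μ n (Iic x) := by
  induction n generalizing x with
  | zero => rfl
  | succ n ih =>
    exact conv_Iic_le_conv_Iic (ae_nonneg_convPow hσ n) hμ
      (fun z hz => ih fun w hw => hle w (hw.trans hz)) hle

variable [IsTopologicalAddGroup E]

lemma convPow_Iic_lt_succ [IsFiniteMeasure σ] [IsFiniteMeasure μ] (hP : IsOpen P)
    (h0 : 0 ∈ closure P) (hμP : ∀ U ⊆ P, IsOpen U → U.Nonempty → μ U ≠ 0)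
    (hσ : ∀ᵐ y ∂σ, 0 ≤ y) (hμ : ∀ᵐ y ∂μ, 0 ≤ y) {n : ℕ}
    (hlt : ∀ᶠ z in 𝓝[P] 0, convPow σ n (Iic z) < convPow μ n (Iic z)) (hx : x ∈ P)
    (hle : ∀ z ≤ x, σ (Iic z) ≤ μ (Iic z)) :
    convPow σ (n + 1) (Iic x) < convPow μ (n + 1) (Iic x) :=
  conv_Iic_lt_conv_Iic (ae_nonneg_convPow hσ n) hμ
    (fun _ hz => convPow_Iic_le hσ hμ (fun w hw => hle w (hw.trans hz)) n) hle
    (frequently_ae_sub hP h0 hμP hx hlt)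

lemma convPow_Iic_lt [IsFiniteMeasure σ] [IsFiniteMeasure μ] (hP : IsOpen P)
    (h0 : 0 ∈ closure P) (hP0 : P ⊆ Ici 0) (hμP : ∀ U ⊆ P, IsOpen U → U.Nonempty → μ U ≠ 0)
    (hσ : ∀ᵐ y ∂σ, 0 ≤ y) (hμ : ∀ᵐ y ∂μ, 0 ≤ y)
    (hlt : ∀ᶠ z in 𝓝[P] 0, σ (Iic z) < μ (Iic z)) {n : ℕ} (hn : 2 ≤ n) (hx : x ∈ P)
    (hle : ∀ z ≤ x, σ (Iic z) ≤ μ (Iic z)) : convPow σ n (Iic x) < convPow μ n (Iic x) := by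
  induction n, hn using Nat.le_induction generalizing x with
  | base =>
    exact convPow_Iic_lt_succ hP h0 hμP hσ hμ (n := 1) (by simpa only [convPow_one]) hx hle
  | succ n _ ih =>
    refine convPow_Iic_lt_succ hP h0 hμP hσ hμ ?_ hx hle
    filter_upwards [nhdsWithin_le_nhds (eventually_sub_mem hP hx), self_mem_nhdsWithin]
      with z hxz hz
    exact ih hz fun w hw => hle w (hw.trans (sub_nonneg.1 (hP0 hxz)))

end Ordered

section Product

variable {E E' : Type*} [AddCommGroup E] [PartialOrder E] [IsOrderedAddMonoid E]
  [MeasurableSpace E] [MeasurableAdd₂ E] [TopologicalSpace E] [OrderClosedTopology E]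
  [IsTopologicalAddGroup E] [AddCommGroup E'] [PartialOrder E'] [IsOrderedAddMonoid E']
  [MeasurableSpace E'] [MeasurableAdd₂ E'] [TopologicalSpace E'] [OrderClosedTopology E']
  [IsTopologicalAddGroup E'] [OpensMeasurableSpace (E × E')]

lemma convPow_prod_Iic_lt {μ : Measure (E × E')}
    {μ₁ : Measure E} {μ₂ : Measure E'} [IsFiniteMeasure μ] [IsFiniteMeasure μ₁]
    [IsFiniteMeasure μ₂] {P : Set (E × E')} (hP : IsOpen P) (h0 : 0 ∈ closure P)
    (hP0 : P ⊆ Ici 0) (hμP : ∀ U ⊆ P, IsOpen U → U.Nonempty → μ U ≠ 0) (hμ : ∀ᵐ y ∂μ, 0 ≤ y)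
    (hμ₁ : ∀ᵐ y ∂μ₁, 0 ≤ y) (hμ₂ : ∀ᵐ y ∂μ₂, 0 ≤ y) {c : ℝ} (hc : 0 ≤ c)
    (hlt : ∀ᶠ z in 𝓝[P] 0, c * (μ₁.real (Iic z.1) * μ₂.real (Iic z.2)) < μ.real (Iic z))
    {n : ℕ} (hn : 2 ≤ n) {x : E × E'} (hx : x ∈ P)
    (hle : ∀ z ≤ x, c * (μ₁.real (Iic z.1) * μ₂.real (Iic z.2)) ≤ μ.real (Iic z)) :
    c ^ n * ((convPow μ₁ n).real (Iic x.1) * (convPow μ₂ n).real (Iic x.2)) <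
      (convPow μ n).real (Iic x) := by
  have hfin : IsFiniteMeasure (ENNReal.ofReal c • μ₁.prod μ₂) :=
    Measure.smul_finite _ ENNReal.ofReal_ne_top
  have hσ : ∀ᵐ y ∂(ENNReal.ofReal c • μ₁.prod μ₂), 0 ≤ y := by
    refine Measure.ae_smul_measure ?_ _
    filter_upwards [Measure.quasiMeasurePreserving_fst.ae hμ₁,
      Measure.quasiMeasurePreserving_snd.ae hμ₂] with y hy₁ hy₂ using ⟨hy₁, hy₂⟩
  have hσ_real (z : E × E') : (ENNReal.ofReal c • μ₁.prod μ₂).real (Iic z) =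
      c * (μ₁.real (Iic z.1) * μ₂.real (Iic z.2)) := by
    simpa only [convPow_one, pow_one] using measureReal_convPow_smul_prod_Iic μ₁ μ₂ hc 1 z
  simp_rw [← hσ_real, measureReal_def] at hlt hle
  rw [← measureReal_convPow_smul_prod_Iic μ₁ μ₂ hc]
  refine ENNReal.toReal_strict_mono (measure_ne_top _ _)
    (convPow_Iic_lt hP h0 hP0 hμP hσ hμ (hlt.mono fun z => ?_) hn hx fun z hz => ?_)
  · exact (ENNReal.toReal_lt_toReal (measure_ne_top _ _) (measure_ne_top _ _)).1
  · exact (ENNReal.toReal_le_toReal (measure_ne_top _ _) (measure_ne_top _ _)).1 (hle z hz)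

end Product

end ConvPow

section Density

variable {E : Type*} [MeasurableSpace E] {vol : Measure E} {g : E → ℝ}

/-- The measure with density `g` with respect to `vol`, for a real-valued `g`; negative values of
`g` are truncated to `0`. -/
noncomputable def realDensity (vol : Measure E) (g : E → ℝ) : Measure E :=
  vol.withDensity fun y => ENNReal.ofReal (g y)

lemma isFiniteMeasure_realDensity (hg : Integrable g vol) : IsFiniteMeasure (realDensity vol g) :=
  isFiniteMeasure_withDensity_ofReal hg.2

lemma realDensity_ne_zero [TopologicalSpace E] [vol.IsOpenPosMeasure] (hg : Integrable g vol)
    {U : Set E} (hU : IsOpen U) (hne : U.Nonempty) (hpos : ∀ y ∈ U, 0 < g y) :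
    realDensity vol g U ≠ 0 := by
  intro h
  rw [realDensity, withDensity_apply_eq_zero' hg.1.aemeasurable.ennreal_ofReal] at h
  have hsub : U ⊆ {y | ENNReal.ofReal (g y) ≠ 0} ∩ U :=
    fun y hy => ⟨(ENNReal.ofReal_pos.2 (hpos y hy)).ne', hy⟩
  exact hU.measure_ne_zero vol hne (measure_mono_null hsub h)

lemma measureReal_realDensity (hg0 : ∀ y, 0 ≤ g y) (hg : Integrable g vol) {s : Set E}
    (hs : MeasurableSet s) : (realDensity vol g).real s = ∫ y in s, g y ∂vol := by
  rw [measureReal_def, realDensity, withDensity_apply _ hs,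
    ← ofReal_integral_eq_lintegral_ofReal hg.restrict (Eventually.of_forall hg0),
    ENNReal.toReal_ofReal (integral_nonneg hg0)]

lemma measureReal_conv_realDensity_Iic [AddCommGroup E] [PartialOrder E] [IsOrderedAddMonoid E]
    [MeasurableAdd₂ E] [TopologicalSpace E] [OrderClosedTopology E] [OpensMeasurableSpace E]
    (ν : Measure E) [IsFiniteMeasure ν] (hg0 : ∀ y, 0 ≤ g y) (hg : Integrable g vol) (x : E) :
    (ν ∗ realDensity vol g).real (Iic x) = ∫ y, ν.real (Iic (x - y)) * g y ∂vol := by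
  have := isFiniteMeasure_realDensity hg
  rw [measureReal_def, conv_Iic,
    ← integral_toReal (measurable_measure_Iic_sub ν x).aemeasurable
      (Eventually.of_forall fun _ => measure_lt_top _ _),
    realDensity, integral_withDensity_eq_integral_toReal_smul₀ hg.1.aemeasurable.ennreal_ofReal
      (Eventually.of_forall fun _ => ENNReal.ofReal_lt_top)]
  refine integral_congr_ae (Eventually.of_forall fun y => ?_)
  simp only [ENNReal.toReal_ofReal (hg0 y), smul_eq_mul, measureReal_def, mul_comm]

/-- `g` is the density with respect to `vol` of a finite measure concentrated on `P`. The support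
condition holds everywhere, not just almost everywhere. -/
structure IsDensityOn (vol : Measure E) (P : Set E) (g : E → ℝ) : Prop where
  nonneg : ∀ y, 0 ≤ g y
  eq_zero : ∀ y ∉ P, g y = 0
  integrable : Integrable g vol

/-- `G m` is the cdf of the `m`-fold convolution of a density `g` on `P`, for `m ≥ 1`, as given by
the recursion `G (m + 1) x = ∫ G m (x - y) g y`, with the integral over `(0, x]` when `P` is the
positive orthant. -/
structure IsConvCdf [AddCommGroup E] [Preorder E] (vol : Measure E) (P : Set E) (g : E → ℝ)
    (G : ℕ → E → ℝ) : Prop where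
  one : ∀ x, G 1 x = ∫ y in P ∩ Iic x, g y ∂vol
  succ : ∀ m, 1 ≤ m → ∀ x, G (m + 1) x = ∫ y in P ∩ Iic x, G m (x - y) * g y ∂vol

lemma IsDensityOn.ae_realDensity_mem {P : Set E} (hg : IsDensityOn vol P g) :
    ∀ᵐ y ∂realDensity vol g, y ∈ P := by
  refine (ae_withDensity_iff' hg.integrable.1.aemeasurable.ennreal_ofReal).2
    (Eventually.of_forall fun y => ?_)
  contrapose!
  intro hy
  rw [hg.eq_zero y hy, ENNReal.ofReal_zero]

lemma IsDensityOn.marginal_fst {E' : Type*} [MeasurableSpace E'] {vol' : Measure E'}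
    [SFinite vol] [SFinite vol'] {P : Set E} {P' : Set E'} {f : E × E' → ℝ}
    (hf : IsDensityOn (vol.prod vol') (P ×ˢ P') f) :
    IsDensityOn vol P fun x => ∫ y, f (x, y) ∂vol' where
  nonneg _ := integral_nonneg fun _ => hf.nonneg _
  eq_zero x hx := by simp [fun y => hf.eq_zero (x, y) fun h => hx h.1]
  integrable := hf.integrable.integral_prod_left

lemma IsDensityOn.marginal_snd {E' : Type*} [MeasurableSpace E'] {vol' : Measure E'}
    [SFinite vol] [SFinite vol'] {P : Set E} {P' : Set E'} {f : E × E' → ℝ}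
    (hf : IsDensityOn (vol.prod vol') (P ×ˢ P') f) :
    IsDensityOn vol' P' fun y => ∫ x, f (x, y) ∂vol where
  nonneg _ := integral_nonneg fun _ => hf.nonneg _
  eq_zero y hy := by simp [fun x => hf.eq_zero (x, y) fun h => hy h.2]
  integrable := hf.integrable.integral_prod_right

lemma setIntegral_prod_le_fst {E' : Type*} [MeasurableSpace E'] {vol' : Measure E'}
    [SFinite vol] [SFinite vol'] {f : E × E' → ℝ} (hf0 : ∀ y, 0 ≤ f y)
    (hf : Integrable f (vol.prod vol')) (s : Set E) (t : Set E') :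
    ∫ z in s ×ˢ t, f z ∂vol.prod vol' ≤ ∫ x in s, ∫ y, f (x, y) ∂vol' ∂vol :=
  calc ∫ z in s ×ˢ t, f z ∂vol.prod vol'
      ≤ ∫ z in s ×ˢ univ, f z ∂vol.prod vol' :=
        setIntegral_mono_set hf.integrableOn (Eventually.of_forall hf0)
          (prod_mono_right (subset_univ t)).eventuallyLE
    _ = ∫ x in s, ∫ y, f (x, y) ∂vol' ∂vol := by
        rw [setIntegral_prod f hf.integrableOn, Measure.restrict_univ]

lemma setIntegral_prod_le_snd {E' : Type*} [MeasurableSpace E'] {vol' : Measure E'}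
    [SFinite vol] [SFinite vol'] {f : E × E' → ℝ} (hf0 : ∀ y, 0 ≤ f y)
    (hf : Integrable f (vol.prod vol')) (s : Set E) (t : Set E') :
    ∫ z in s ×ˢ t, f z ∂vol.prod vol' ≤ ∫ y in t, ∫ x, f (x, y) ∂vol ∂vol' :=
  calc ∫ z in s ×ˢ t, f z ∂vol.prod vol'
      = ∫ z in t ×ˢ s, f z.swap ∂vol'.prod vol := (setIntegral_prod_swap s t f).symm
    _ ≤ ∫ y in t, ∫ x, f (x, y) ∂vol ∂vol' :=
        setIntegral_prod_le_fst (fun _ => hf0 _) hf.swap t s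

lemma IsConvCdf.one_nonneg [AddCommGroup E] [Preorder E] {P : Set E} {G : ℕ → E → ℝ}
    (hG : IsConvCdf vol P g G) (hg : ∀ y, 0 ≤ g y) (x : E) : 0 ≤ G 1 x :=
  hG.one x ▸ integral_nonneg hg

lemma IsConvCdf.one_eq_zero [AddCommGroup E] [Preorder E] {P : Set E} {G : ℕ → E → ℝ}
    (hG : IsConvCdf vol P g G) (hP : IsUpperSet P) {x : E} (hx : x ∉ P) : G 1 x = 0 := by
  have hempty : P ∩ Iic x = ∅ := eq_empty_of_forall_notMem fun _ hy => hx (hP hy.2 hy.1)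
  rw [hG.one, hempty, setIntegral_empty]

lemma IsConvCdf.eq_measureReal_convPow [AddCommGroup E] [PartialOrder E] [IsOrderedAddMonoid E]
    [MeasurableAdd₂ E] [TopologicalSpace E] [OrderClosedTopology E] [OpensMeasurableSpace E]
    {P : Set E} {G : ℕ → E → ℝ} (hG : IsConvCdf vol P g G) (hg : IsDensityOn vol P g)
    (hP : P ⊆ Ici 0) {m : ℕ} (hm : 1 ≤ m) (x : E) :
    G m x = (convPow (realDensity vol g) m).real (Iic x) := by
  have := isFiniteMeasure_realDensity hg.integrable
  induction m, hm using Nat.le_induction generalizing x with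
  | base =>
    rw [hG.one, convPow_one, measureReal_realDensity hg.nonneg hg.integrable measurableSet_Iic]
    exact (setIntegral_eq_of_subset_of_forall_sdiff_eq_zero measurableSet_Iic inter_subset_right
      fun y hy => hg.eq_zero y fun hyP => hy.2 ⟨hyP, hy.1⟩).symm
  | succ m hm ih =>
    rw [hG.succ m hm, convPow, measureReal_conv_realDensity_Iic _ hg.nonneg hg.integrable]
    simp_rw [ih]
    refine setIntegral_eq_integral_of_forall_compl_eq_zero fun y hy => ?_
    by_cases hyP : y ∈ P
    · have hyx : ¬ 0 ≤ x - y := fun h => hy ⟨hyP, sub_nonneg.1 h⟩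
      rw [measureReal_def, measure_Iic_eq_zero
        (ae_nonneg_convPow (hg.ae_realDensity_mem.mono hP) m) hyx, ENNReal.toReal_zero, zero_mul]
    · rw [hg.eq_zero y hyP, mul_zero]

end Density

section Orthant

variable {ι κ : Type*}

/-- The open positive orthant `(0, ∞)^ι`. -/
def orthant (ι : Type*) : Set (ι → ℝ) :=
  {y | ∀ i, 0 < y i}

lemma isOpen_orthant [Finite ι] : IsOpen (orthant ι) := by
  simpa only [orthant, ofPred_forall] using
    isOpen_iInter_of_finite fun i => isOpen_lt continuous_const (continuous_apply i)

lemma zero_mem_closure_orthant : (0 : ι → ℝ) ∈ closure (orthant ι) := by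
  have : orthant ι = univ.pi fun _ => Ioi (0 : ℝ) := by simp [orthant, Set.pi]
  rw [this, closure_pi_set]
  exact fun i _ => by simp

lemma orthant_subset_Ici : orthant ι ⊆ Ici 0 :=
  fun _ hy i => (hy i).le

lemma isUpperSet_orthant : IsUpperSet (orthant ι) :=
  fun _ _ hab ha i => (ha i).trans_le (hab i)

lemma isOpen_orthant_prod [Finite ι] [Finite κ] : IsOpen (orthant ι ×ˢ orthant κ) :=
  isOpen_orthant.prod isOpen_orthant

lemma zero_mem_closure_orthant_prod : 0 ∈ closure (orthant ι ×ˢ orthant κ) := by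
  rw [closure_prod_eq]
  exact ⟨zero_mem_closure_orthant, zero_mem_closure_orthant⟩

lemma orthant_prod_subset_Ici : orthant ι ×ˢ orthant κ ⊆ Ici 0 :=
  fun _ hy => ⟨orthant_subset_Ici hy.1, orthant_subset_Ici hy.2⟩

lemma orthant_inter_Iic (x : ι → ℝ) : orthant ι ∩ Iic x = {y | ∀ i, 0 < y i ∧ y i ≤ x i} := by
  ext y
  simp only [orthant, mem_ofPred_eq, mem_inter_iff, mem_Iic, Pi.le_def, forall_and]

lemma orthant_prod_inter_Iic (x : (ι → ℝ) × (κ → ℝ)) :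
    orthant ι ×ˢ orthant κ ∩ Iic x =
      {y | (∀ i, 0 < y.1 i ∧ y.1 i ≤ x.1 i) ∧ ∀ j, 0 < y.2 j ∧ y.2 j ≤ x.2 j} := by
  rw [Iic_prod_eq, prod_inter_prod, orthant_inter_Iic, orthant_inter_Iic]
  rfl

end Orthant

section Ratio

variable {ι κ : Type*} {F : (ι → ℝ) × (κ → ℝ) → ℝ} {F₁ : (ι → ℝ) → ℝ} {F₂ : (κ → ℝ) → ℝ}

/-- The ratio of a joint cdf to the product of its two marginal cdfs. -/
noncomputable def jointRatio (F : (ι → ℝ) × (κ → ℝ) → ℝ) (F₁ : (ι → ℝ) → ℝ) (F₂ : (κ → ℝ) → ℝ)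
    (x : (ι → ℝ) × (κ → ℝ)) : ℝ :=
  F x / (F₁ x.1 * F₂ x.2)

lemma deriv_deriv_log_eq_zero {H : ℝ → ℝ → ℝ} {u v : ℝ → ℝ} {s t : ℝ}
    (hH : ∀ᶠ p in 𝓝 (s, t), H p.1 p.2 = v p.1 * u p.2 ∧ H p.1 p.2 ≠ 0) :
    deriv (fun s' => deriv (fun t' => Real.log (H s' t')) t) s = 0 := by
  have hinner : (fun s' => deriv (fun t' => Real.log (H s' t')) t)
      =ᶠ[𝓝 s] fun _ => deriv (fun t' => Real.log (u t')) t := by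
    filter_upwards [hH.curry_nhds] with s' hs'
    have hlog : (fun t' => Real.log (H s' t'))
        =ᶠ[𝓝 t] fun t' => Real.log (v s') + Real.log (u t') := by
      filter_upwards [hs'] with t' ⟨hprod, hne⟩
      rw [hprod] at hne ⊢
      exact Real.log_mul (left_ne_zero_of_mul hne) (right_ne_zero_of_mul hne)
    rw [hlog.deriv_eq, deriv_const_add]
  rw [hinner.deriv_eq, deriv_const]

lemma deriv_deriv_log_update_eq_zero [Finite ι] [Finite κ] [DecidableEq ι] [DecidableEq κ]
    {c : ℝ} {w : (ι → ℝ) × (κ → ℝ)} (i : ι) (j : κ)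
    (hF : ∀ᶠ z in 𝓝 w, F z = c * (F₁ z.1 * F₂ z.2) ∧ F z ≠ 0) :
    deriv (fun s => deriv (fun t => Real.log
      (F (Function.update w.1 i t, Function.update w.2 j s))) (w.1 i)) (w.2 j) = 0 := by
  have hcont : ContinuousAt (fun p : ℝ × ℝ =>
      (Function.update w.1 i p.2, Function.update w.2 j p.1)) (w.2 j, w.1 i) := by
    fun_prop
  refine deriv_deriv_log_eq_zero (u := fun t => F₁ (Function.update w.1 i t))
    (v := fun s => c * F₂ (Function.update w.2 j s)) ?_
  filter_upwards [hcont.eventually (by simpa only [Function.update_eq_self] using hF)]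
    with p hp using ⟨hp.1.trans (by ring), hp.2⟩

lemma exists_jointRatio_lt [Finite ι] [Finite κ] [DecidableEq ι] [DecidableEq κ] (i : ι) (j : κ)
    (hmixed : ∀ x ∈ orthant ι ×ˢ orthant κ,
      deriv (fun s => deriv (fun t => Real.log
        (F (Function.update x.1 i t, Function.update x.2 j s))) (x.1 i)) (x.2 j) ≠ 0)
    (hne : ∀ x ∈ orthant ι ×ˢ orthant κ, jointRatio F F₁ F₂ x ≠ 0)
    (hanti : AntitoneOn (jointRatio F F₁ F₂) (orthant ι ×ˢ orthant κ))
    {b : (ι → ℝ) × (κ → ℝ)} (hb : b ∈ orthant ι ×ˢ orthant κ) :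
    ∃ w ∈ orthant ι ×ˢ orthant κ, jointRatio F F₁ F₂ b < jointRatio F F₁ F₂ w := by
  by_contra! hmax
  have hfactor : ∀ z ∈ orthant ι ×ˢ orthant κ, z ≤ b →
      F z = jointRatio F F₁ F₂ b * (F₁ z.1 * F₂ z.2) ∧ F z ≠ 0 := by
    intro z hz hzb
    have hdiv := div_ne_zero_iff.1 (hne z hz)
    rw [← (hmax z hz).antisymm (hanti hz hb hzb), jointRatio, div_mul_cancel₀ _ hdiv.2]
    exact ⟨rfl, hdiv.1⟩
  have hhalf : (2⁻¹ : ℝ) • b ∈ orthant ι ×ˢ orthant κ :=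
    ⟨fun i => mul_pos (by norm_num) (hb.1 i), fun j => mul_pos (by norm_num) (hb.2 j)⟩
  refine hmixed _ hhalf (deriv_deriv_log_update_eq_zero (c := jointRatio F F₁ F₂ b)
    (F₁ := F₁) (F₂ := F₂) i j ?_)
  have hbelow : ∀ᶠ z in 𝓝 ((2⁻¹ : ℝ) • b), b - z ∈ orthant ι ×ˢ orthant κ := by
    refine (continuous_sub_left b).continuousAt.eventually_mem (isOpen_orthant_prod.mem_nhds ?_)
    convert hhalf using 1
    module
  filter_upwards [isOpen_orthant_prod.mem_nhds hhalf, hbelow] with z hz hzb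
  exact hfactor z hz (sub_nonneg.1 (orthant_prod_subset_Ici hzb))

lemma nonempty_of_setIntegral_orthant_lt [Fintype ι] {g : (ι → ℝ) → ℝ} {x : ι → ℝ}
    (h : ∫ y in orthant ι ∩ Iic x, g y < ∫ y, g y) : Nonempty ι := by
  by_contra hι
  rw [not_nonempty_iff] at hι
  have hbox : orthant ι ∩ Iic x = univ :=
    Subsingleton.eq_univ_of_nonempty ⟨x, isEmptyElim, le_refl x⟩
  rw [hbox, setIntegral_univ] at h
  exact h.false

lemma nonempty_of_one_lt_jointRatio [Fintype ι] [Fintype κ] {f : (ι → ℝ) × (κ → ℝ) → ℝ}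
    (hf0 : ∀ y, 0 ≤ f y) (hf : ∫ y, f y = 1) {x : (ι → ℝ) × (κ → ℝ)}
    (hF : F x = ∫ y in orthant ι ×ˢ orthant κ ∩ Iic x, f y)
    (hF₁ : F₁ x.1 = ∫ y in orthant ι ∩ Iic x.1, ∫ z, f (y, z))
    (hF₂ : F₂ x.2 = ∫ z in orthant κ ∩ Iic x.2, ∫ y, f (y, z))
    (hr : 1 < jointRatio F F₁ F₂ x) : Nonempty ι ∧ Nonempty κ := by
  have hfi : Integrable f (volume.prod volume) :=
    not_not.1 fun h => zero_ne_one ((integral_undef h).symm.trans hf)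
  rw [Iic_prod_eq, prod_inter_prod] at hF
  have hF_le₁ : F x ≤ F₁ x.1 := by
    rw [hF, hF₁]
    exact setIntegral_prod_le_fst hf0 hfi _ _
  have hF_le₂ : F x ≤ F₂ x.2 := by
    rw [hF, hF₂]
    exact setIntegral_prod_le_snd hf0 hfi _ _
  have hF₁0 : 0 ≤ F₁ x.1 := hF₁ ▸ integral_nonneg fun _ => integral_nonneg fun _ => hf0 _
  have hF₂0 : 0 ≤ F₂ x.2 := hF₂ ▸ integral_nonneg fun _ => integral_nonneg fun _ => hf0 _
  have hlt : F₁ x.1 * F₂ x.2 < F x := (one_lt_div₀ ((mul_nonneg hF₁0 hF₂0).lt_of_ne'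
    fun h => by norm_num [jointRatio, h] at hr)).1 hr
  constructor
  · refine nonempty_of_setIntegral_orthant_lt (g := fun y => ∫ z, f (y, z)) (x := x.1) ?_
    rw [← hF₁, ← integral_prod f hfi]
    refine lt_of_lt_of_eq ?_ hf.symm
    by_contra! h
    exact (hlt.trans_le hF_le₂).not_ge (le_mul_of_one_le_left hF₂0 h)
  · refine nonempty_of_setIntegral_orthant_lt (g := fun z => ∫ y, f (y, z)) (x := x.2) ?_
    rw [← hF₂, ← integral_prod_symm f hfi]
    refine lt_of_lt_of_eq ?_ hf.symm
    by_contra! h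
    exact (hlt.trans_le hF_le₁).not_ge (le_mul_of_one_le_right hF₁0 h)

lemma jointRatio_mul_le (hF : ∀ z, 0 ≤ F z) (hF₁ : ∀ z, 0 ≤ F₁ z) (hF₂ : ∀ z, 0 ≤ F₂ z)
    (hF₁_zero : ∀ z ∉ orthant ι, F₁ z = 0) (hF₂_zero : ∀ z ∉ orthant κ, F₂ z = 0)
    (hanti : AntitoneOn (jointRatio F F₁ F₂) (orthant ι ×ˢ orthant κ))
    {b z : (ι → ℝ) × (κ → ℝ)} (hb : b ∈ orthant ι ×ˢ orthant κ) (hzb : z ≤ b) :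
    jointRatio F F₁ F₂ b * (F₁ z.1 * F₂ z.2) ≤ F z := by
  by_cases h : F₁ z.1 * F₂ z.2 = 0
  · rw [h, mul_zero]
    exact hF z
  · have hz : z ∈ orthant ι ×ˢ orthant κ :=
      ⟨not_imp_comm.1 (hF₁_zero _) (left_ne_zero_of_mul h),
        not_imp_comm.1 (hF₂_zero _) (right_ne_zero_of_mul h)⟩
    exact (le_div_iff₀ ((mul_nonneg (hF₁ _) (hF₂ _)).lt_of_ne' h)).1 (hanti hz hb hzb)

lemma eventually_jointRatio_mul_lt [Finite ι] [Finite κ] (hF₁ : ∀ z, 0 ≤ F₁ z)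
    (hF₂ : ∀ z, 0 ≤ F₂ z) (hanti : AntitoneOn (jointRatio F F₁ F₂) (orthant ι ×ˢ orthant κ))
    {c : ℝ} (hc : 0 ≤ c) {w : (ι → ℝ) × (κ → ℝ)} (hw : w ∈ orthant ι ×ˢ orthant κ)
    (hcw : c < jointRatio F F₁ F₂ w) :
    ∀ᶠ z in 𝓝[orthant ι ×ˢ orthant κ] 0, c * (F₁ z.1 * F₂ z.2) < F z := by
  filter_upwards [nhdsWithin_le_nhds (eventually_sub_mem isOpen_orthant_prod hw),
    self_mem_nhdsWithin] with z hwz hz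
  have hlt : c < jointRatio F F₁ F₂ z :=
    hcw.trans_le (hanti hz hw (sub_nonneg.1 (orthant_prod_subset_Ici hwz)))
  have hne : F₁ z.1 * F₂ z.2 ≠ 0 := (div_ne_zero_iff.1 (hc.trans_lt hlt).ne').2
  exact (lt_div_iff₀ ((mul_nonneg (hF₁ _) (hF₂ _)).lt_of_ne' hne)).1 hlt

end Ratio

theorem convolution_inequality_fixed_b_general {ι κ : Type*} [Fintype ι] [Fintype κ]
    {f : (ι → ℝ) × (κ → ℝ) → ℝ} {f₁ : (ι → ℝ) → ℝ} {f₂ : (κ → ℝ) → ℝ}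
    {Fc : ℕ → (ι → ℝ) × (κ → ℝ) → ℝ} {F₁c : ℕ → (ι → ℝ) → ℝ} {F₂c : ℕ → (κ → ℝ) → ℝ}
    (hf : IsDensityOn volume (orthant ι ×ˢ orthant κ) f)
    (hfpos : ∀ y ∈ orthant ι ×ˢ orthant κ, 0 < f y)
    (hf₁ : IsDensityOn volume (orthant ι) f₁) (hf₂ : IsDensityOn volume (orthant κ) f₂)
    (hFc : IsConvCdf volume (orthant ι ×ˢ orthant κ) f Fc)
    (hF₁c : IsConvCdf volume (orthant ι) f₁ F₁c) (hF₂c : IsConvCdf volume (orthant κ) f₂ F₂c)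
    (hanti : AntitoneOn (jointRatio (Fc 1) (F₁c 1) (F₂c 1)) (orthant ι ×ˢ orthant κ))
    {b : (ι → ℝ) × (κ → ℝ)} (hb : b ∈ orthant ι ×ˢ orthant κ)
    (hlt : ∃ w ∈ orthant ι ×ˢ orthant κ,
      jointRatio (Fc 1) (F₁c 1) (F₂c 1) b < jointRatio (Fc 1) (F₁c 1) (F₂c 1) w)
    {m : ℕ} (hm : 2 ≤ m) {x : (ι → ℝ) × (κ → ℝ)} (hx : x ∈ orthant ι ×ˢ orthant κ)
    (hxb : x ≤ b) :
    jointRatio (Fc 1) (F₁c 1) (F₂c 1) b ^ m * (F₁c m x.1 * F₂c m x.2) < Fc m x := by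
  have hFc0 := hFc.one_nonneg hf.nonneg
  have hF₁c0 := hF₁c.one_nonneg hf₁.nonneg
  have hF₂c0 := hF₂c.one_nonneg hf₂.nonneg
  have hc : 0 ≤ jointRatio (Fc 1) (F₁c 1) (F₂c 1) b :=
    div_nonneg (hFc0 b) (mul_nonneg (hF₁c0 _) (hF₂c0 _))
  have hle := fun z (hz : z ≤ x) => jointRatio_mul_le hFc0 hF₁c0 hF₂c0
    (fun _ => hF₁c.one_eq_zero isUpperSet_orthant) (fun _ => hF₂c.one_eq_zero isUpperSet_orthant)
    hanti hb (hz.trans hxb)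
  obtain ⟨w, hw, hbw⟩ := hlt
  have hnear := eventually_jointRatio_mul_lt hF₁c0 hF₂c0 hanti hc hw hbw
  have hcdf {n : ℕ} := hFc.eq_measureReal_convPow hf orthant_prod_subset_Ici (m := n)
  have hcdf₁ {n : ℕ} := hF₁c.eq_measureReal_convPow hf₁ orthant_subset_Ici (m := n)
  have hcdf₂ {n : ℕ} := hF₂c.eq_measureReal_convPow hf₂ orthant_subset_Ici (m := n)
  have := isFiniteMeasure_realDensity hf.integrable
  have := isFiniteMeasure_realDensity hf₁.integrable
  have := isFiniteMeasure_realDensity hf₂.integrable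
  generalize jointRatio (Fc 1) (F₁c 1) (F₂c 1) b = c at *
  simp only [hcdf le_rfl, hcdf₁ le_rfl, hcdf₂ le_rfl, convPow_one] at hle hnear
  have hm1 : 1 ≤ m := one_le_two.trans hm
  rw [hcdf hm1, hcdf₁ hm1, hcdf₂ hm1]
  exact convPow_prod_Iic_lt isOpen_orthant_prod zero_mem_closure_orthant_prod
    orthant_prod_subset_Ici
    (fun U hUP hU hne => realDensity_ne_zero hf.integrable hU hne fun y hy => hfpos y (hUP hy))
    (hf.ae_realDensity_mem.mono orthant_prod_subset_Ici)
    (hf₁.ae_realDensity_mem.mono orthant_subset_Ici)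
    (hf₂.ae_realDensity_mem.mono orthant_subset_Ici) hc hnear hm hx hle

theorem convolution_inequality_fixed_b
    (k l : ℕ)
    (f F : (Fin k → ℝ) × (Fin l → ℝ) → ℝ)
    (f₁ : (Fin k → ℝ) → ℝ) (F₁ : (Fin k → ℝ) → ℝ)
    (f₂ : (Fin l → ℝ) → ℝ) (F₂ : (Fin l → ℝ) → ℝ)
    -- f is a probability density, positive exactly on the positive orthant
    (hfpos : ∀ y : (Fin k → ℝ) × (Fin l → ℝ),
      (∀ i, 0 < y.1 i) → (∀ j, 0 < y.2 j) → 0 < f y)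
    (hfsupp : ∀ y : (Fin k → ℝ) × (Fin l → ℝ),
      ¬ ((∀ i, 0 < y.1 i) ∧ (∀ j, 0 < y.2 j)) → f y = 0)
    (hfint : ∫ y, f y = 1)
    -- F is the cdf of f, and f₁, F₁, f₂, F₂ the marginal densities and cdfs
    (hF : ∀ x : (Fin k → ℝ) × (Fin l → ℝ),
      F x = ∫ y in {y : (Fin k → ℝ) × (Fin l → ℝ) |
              (∀ i, 0 < y.1 i ∧ y.1 i ≤ x.1 i) ∧ (∀ j, 0 < y.2 j ∧ y.2 j ≤ x.2 j)}, f y)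
    (hf₁ : ∀ x₁ : Fin k → ℝ, f₁ x₁ = ∫ y₂ : Fin l → ℝ, f (x₁, y₂))
    (hf₂ : ∀ x₂ : Fin l → ℝ, f₂ x₂ = ∫ y₁ : Fin k → ℝ, f (y₁, x₂))
    (hF₁ : ∀ x₁ : Fin k → ℝ,
      F₁ x₁ = ∫ z₁ in {z₁ : Fin k → ℝ | ∀ i, 0 < z₁ i ∧ z₁ i ≤ x₁ i}, f₁ z₁)
    (hF₂ : ∀ x₂ : Fin l → ℝ,
      F₂ x₂ = ∫ z₂ in {z₂ : Fin l → ℝ | ∀ j, 0 < z₂ j ∧ z₂ j ≤ x₂ j}, f₂ z₂)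
    -- F is C² and strictly MTP₂ on the positive orthant
    (hC2 : ContDiffOn ℝ 2 F {x | (∀ i, 0 < x.1 i) ∧ (∀ j, 0 < x.2 j)})
    (hMTP2 : ∀ x : (Fin k → ℝ) × (Fin l → ℝ),
      (∀ i, 0 < x.1 i) → (∀ j, 0 < x.2 j) →
      ∀ c d : Fin k ⊕ Fin l, c ≠ d →
      0 < deriv (fun s => deriv
            (fun t => Real.log (F (updCoord (updCoord x d s) c t)))
            (coordVal x c)) (coordVal x d))
    -- the ratio r is > 1 and coordinatewise decreasing on the positive orthant
    (hr1 : ∀ x : (Fin k → ℝ) × (Fin l → ℝ),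
      (∀ i, 0 < x.1 i) → (∀ j, 0 < x.2 j) → 1 < F x / (F₁ x.1 * F₂ x.2))
    (hrdec : ∀ x y : (Fin k → ℝ) × (Fin l → ℝ),
      (∀ i, 0 < x.1 i) → (∀ j, 0 < x.2 j) →
      (∀ i, x.1 i ≤ y.1 i) → (∀ j, x.2 j ≤ y.2 j) →
      F y / (F₁ y.1 * F₂ y.2) ≤ F x / (F₁ x.1 * F₂ x.2))
    -- the m-fold convolutions of F and of its marginals
    (Fc : ℕ → (Fin k → ℝ) × (Fin l → ℝ) → ℝ)
    (F₁c : ℕ → (Fin k → ℝ) → ℝ) (F₂c : ℕ → (Fin l → ℝ) → ℝ)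
    (hFc1 : Fc 1 = F) (hF₁c1 : F₁c 1 = F₁) (hF₂c1 : F₂c 1 = F₂)
    (hFcrec : ∀ m : ℕ, 1 ≤ m → ∀ x : (Fin k → ℝ) × (Fin l → ℝ),
      Fc (m + 1) x = ∫ y in {y : (Fin k → ℝ) × (Fin l → ℝ) |
          (∀ i, 0 < y.1 i ∧ y.1 i ≤ x.1 i) ∧ (∀ j, 0 < y.2 j ∧ y.2 j ≤ x.2 j)},
        Fc m (x - y) * f y)
    (hF₁crec : ∀ m : ℕ, 1 ≤ m → ∀ x₁ : Fin k → ℝ,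
      F₁c (m + 1) x₁ = ∫ y₁ in {y₁ : Fin k → ℝ | ∀ i, 0 < y₁ i ∧ y₁ i ≤ x₁ i},
        F₁c m (x₁ - y₁) * f₁ y₁)
    (hF₂crec : ∀ m : ℕ, 1 ≤ m → ∀ x₂ : Fin l → ℝ,
      F₂c (m + 1) x₂ = ∫ y₂ in {y₂ : Fin l → ℝ | ∀ j, 0 < y₂ j ∧ y₂ j ≤ x₂ j},
        F₂c m (x₂ - y₂) * f₂ y₂) :
    ∀ m : ℕ, 2 ≤ m → ∀ x b : (Fin k → ℝ) × (Fin l → ℝ),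
      (∀ i, 0 < x.1 i) → (∀ j, 0 < x.2 j) →
      (∀ i, 0 < b.1 i) → (∀ j, 0 < b.2 j) →
      (∀ i, x.1 i ≤ b.1 i) → (∀ j, x.2 j ≤ b.2 j) →
      Fc m x > (F b / (F₁ b.1 * F₂ b.2)) ^ m * (F₁c m x.1 * F₂c m x.2) := by
  subst hFc1 hF₁c1 hF₂c1
  obtain rfl : f₁ = fun x₁ => ∫ y₂, f (x₁, y₂) := funext hf₁
  obtain rfl : f₂ = fun x₂ => ∫ y₁, f (y₁, x₂) := funext hf₂
  simp_rw [← orthant_inter_Iic] at hF₁ hF₂ hF₁crec hF₂crec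
  simp_rw [← orthant_prod_inter_Iic] at hF hFcrec
  intro m hm x b hx₁ hx₂ hb₁ hb₂ hxb₁ hxb₂
  have hf : IsDensityOn volume (orthant (Fin k) ×ˢ orthant (Fin l)) f :=
    { nonneg := fun y => (em _).elim (fun h => (hfpos y h.1 h.2).le) fun h => (hfsupp y h).ge
      eq_zero := hfsupp
      integrable := not_not.1 fun h => zero_ne_one ((integral_undef h).symm.trans hfint) }
  have hanti : AntitoneOn (jointRatio (Fc 1) (F₁c 1) (F₂c 1))
      (orthant (Fin k) ×ˢ orthant (Fin l)) :=
    fun x hx y _ hxy => hrdec x y hx.1 hx.2 hxy.1 hxy.2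
  obtain ⟨⟨i⟩, ⟨j⟩⟩ := nonempty_of_one_lt_jointRatio hf.nonneg hfint (hF b) (hF₁ b.1) (hF₂ b.2)
    (hr1 b hb₁ hb₂)
  have hlt := exists_jointRatio_lt i j
    (fun x hx => (hMTP2 x hx.1 hx.2 (.inl i) (.inr j) Sum.inl_ne_inr).ne')
    (fun x hx => (one_pos.trans (hr1 x hx.1 hx.2)).ne') hanti ⟨hb₁, hb₂⟩
  exact convolution_inequality_fixed_b_general hf (fun y hy => hfpos y hy.1 hy.2) hf.marginal_fst
    hf.marginal_snd ⟨hF, hFcrec⟩ ⟨hF₁, hF₁crec⟩ ⟨hF₂, hF₂crec⟩ hanti ⟨hb₁, hb₂⟩ hlt hm ⟨hx₁, hx₂⟩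
    ⟨hxb₁, hxb₂⟩
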